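/- Three-factor mixed-norm estimate from the proof of Lemma 7.1: let Ω ⊆ ℝ² be measurable, T > 0, μ ∈ (1/2,1), and set β = 1−μ, ν = 2μ−1. Let r, s, σ, p, z ∈ [1,∞] satisfy μ/r + ν/2 = 1/p and μ/s + β + ν/σ = 1/z. Then for every measurable ρ : Ω × (0,T) → [0,∞) and every measurable u : Ω × (0,T) → ℝ, ‖ρu‖_{L^p(0,T;L^z(Ω))} ≤ ‖ρ‖_{L^r(0,T;L^s(Ω))}^{μ} · ‖ρu²‖_{L^∞(0,T;L¹(Ω))}^{β} · ‖u‖_{L²(0,T;L^σ(Ω))}^{ν}. -/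

import Mathlib

/-!
The estimate is Hölder's inequality applied twice. Since `μ + β = 1` and `2β + ν = 1`, there is the
pointwise factorization `ρ|u| = ρ^μ (ρu²)^β |u|^ν`. A weighted three-factor Hölder inequality
(`eLpNorm_three_le`) on each time slice, with exponents `s, 1, σ`, bounds the spatial norm of `ρu`
by a product of powers of spatial norms; the same inequality in time, with exponents `r, ∞, 2`,
gives the result.

Both applications are covered by one statement about `ℝ≥0∞`-valued functions, because the spatial
norms may be infinite at some times; Mathlib's Hölder inequality for `eLpNorm` concerns
normed-space-valued functions, so the extended version is derived from the `lintegral` one. The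
second application needs the spatial norms to be measurable in time (`measurable_eLpNorm_slice`),
which for the exponent `∞` follows from measurability of the measures of the superlevel sets.
-/

open MeasureTheory ENNReal

/-- The `L^a(0,T)` norm of an `ℝ≥0∞`-valued function of time. -/
noncomputable def timeNorm (T : ℝ) (a : ℝ≥0∞) (G : ℝ → ℝ≥0∞) : ℝ≥0∞ :=
  if a = ⊤ then essSup G (volume.restrict (Set.Ioo 0 T))
  else (∫⁻ t in Set.Ioo (0 : ℝ) T, G t ^ a.toReal) ^ (1 / a.toReal)

/-- The mixed norm `‖F‖_{L^a(0,T;L^b(Ω))} = ‖ t ↦ ‖F(·,t)‖_{L^b(Ω)} ‖_{L^a(0,T)}`. -/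
noncomputable def mixedNorm (Ω : Set (ℝ × ℝ)) (T : ℝ) (a b : ℝ≥0∞)
    (F : ℝ × ℝ → ℝ → ℝ) : ℝ≥0∞ :=
  timeNorm T a fun t => eLpNorm (fun x => F x t) b (volume.restrict Ω)

/-- Hölder's inequality for `ℝ≥0∞`-valued functions when the first exponent is `∞`. -/
lemma eLpNorm_mul_le_top {α : Type*} [MeasurableSpace α] {m : Measure α} {f g : α → ℝ≥0∞}
    (hg : AEMeasurable g m) (p : ℝ≥0∞) :
    eLpNorm (fun x => f x * g x) p m ≤ eLpNorm f ⊤ m * eLpNorm g p m := by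
  by_cases h0 : p = 0
  · simp [h0]
  by_cases ht : p = ⊤
  · subst ht
    simp only [eLpNorm_exponent_top, eLpNormEssSup_eq_essSup_enorm, enorm_eq_self]
    exact ENNReal.essSup_mul_le f g
  have hp : 0 < p.toReal := ENNReal.toReal_pos h0 ht
  rw [eLpNorm_eq_lintegral_rpow_enorm_toReal h0 ht, eLpNorm_eq_lintegral_rpow_enorm_toReal h0 ht]
  set C := eLpNorm f ⊤ m with hC
  have hfC : ∀ᵐ x ∂m, f x ≤ C := by
    rw [hC, eLpNorm_exponent_top]
    simpa [eLpNormEssSup_eq_essSup_enorm] using! ENNReal.ae_le_essSup f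
  calc (∫⁻ x, ‖f x * g x‖ₑ ^ p.toReal ∂m) ^ (1 / p.toReal)
      ≤ (∫⁻ x, C ^ p.toReal * g x ^ p.toReal ∂m) ^ (1 / p.toReal) := by
        refine ENNReal.rpow_le_rpow (lintegral_mono_ae ?_) (by positivity)
        filter_upwards [hfC] with x hx
        rw [enorm_eq_self, ENNReal.mul_rpow_of_nonneg _ _ hp.le]
        gcongr
    _ = C * (∫⁻ x, ‖g x‖ₑ ^ p.toReal ∂m) ^ (1 / p.toReal) := by
        rw [lintegral_const_mul'' _ (hg.pow_const _),
          ENNReal.mul_rpow_of_nonneg _ _ (by positivity), ← ENNReal.rpow_mul,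
          mul_one_div_cancel hp.ne', ENNReal.rpow_one]
        simp only [enorm_eq_self]

lemma eLpNorm_mul_le_ennreal {α : Type*} [MeasurableSpace α] {m : Measure α} {f g : α → ℝ≥0∞}
    (hf : AEMeasurable f m) (hg : AEMeasurable g m) {p q r : ℝ≥0∞} (h : p⁻¹ + q⁻¹ = r⁻¹) :
    eLpNorm (fun x => f x * g x) r m ≤ eLpNorm f p m * eLpNorm g q m := by
  obtain (rfl | rfl | hp) := ENNReal.trichotomy p
  · have : r = 0 := by simpa using h.symm
    simp [this]
  · have : q = r := by simpa using h
    exact this ▸ eLpNorm_mul_le_top hg q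
  obtain (rfl | rfl | hq) := ENNReal.trichotomy q
  · have : r = 0 := by simpa using h.symm
    simp [this]
  · have : p = r := by simpa using h
    rw [mul_comm, ← this]
    simpa only [mul_comm] using eLpNorm_mul_le_top (f := g) hf p
  obtain ⟨hp₁, hp₂⟩ := ENNReal.toReal_pos_iff.mp hp
  obtain ⟨hq₁, hq₂⟩ := ENNReal.toReal_pos_iff.mp hq
  have hpqr' : 1 / r.toReal = 1 / p.toReal + 1 / q.toReal := by
    have := congrArg ENNReal.toReal h
    rw [ENNReal.toReal_add (by simpa using hp₁.ne') (by simpa using hq₁.ne')] at this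
    simpa using this.symm
  have hr : 0 < r.toReal := one_div_pos.mp <| by rw [hpqr']; positivity
  obtain ⟨hr₁, hr₂⟩ := ENNReal.toReal_pos_iff.mp hr
  have hrp : r.toReal < p.toReal := lt_of_one_div_lt_one_div hp <|
    hpqr' ▸ lt_add_of_pos_right _ (by positivity)
  rw [eLpNorm_eq_lintegral_rpow_enorm_toReal hr₁.ne' hr₂.ne,
    eLpNorm_eq_lintegral_rpow_enorm_toReal hp₁.ne' hp₂.ne,
    eLpNorm_eq_lintegral_rpow_enorm_toReal hq₁.ne' hq₂.ne]
  exact ENNReal.lintegral_Lp_mul_le_Lq_mul_Lr hr hrp hpqr' m hf hg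

lemma eLpNorm_rpow_ennreal {α : Type*} [MeasurableSpace α] {m : Measure α} (f : α → ℝ≥0∞)
    {a : ℝ} (ha : 0 < a) (p : ℝ≥0∞) :
    eLpNorm (fun x => f x ^ a) (p / ENNReal.ofReal a) m = eLpNorm f p m ^ a := by
  have h := eLpNorm_enorm_rpow (p := p / ENNReal.ofReal a) (μ := m) f ha
  rw [ENNReal.div_mul_cancel (by simpa using ha) (by simp)] at h
  exact h

/-- Weighted three-factor Hölder inequality; the weights need not sum to one. -/
lemma eLpNorm_three_le {α : Type*} [MeasurableSpace α] {m : Measure α} {f g h : α → ℝ≥0∞}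
    (hf : AEMeasurable f m) (hg : AEMeasurable g m) (hh : AEMeasurable h m)
    {a b c : ℝ} (ha : 0 < a) (hb : 0 < b) (hc : 0 < c) {p q r s : ℝ≥0∞}
    (H : ENNReal.ofReal a * p⁻¹ + ENNReal.ofReal b * q⁻¹ + ENNReal.ofReal c * r⁻¹ = s⁻¹) :
    eLpNorm (fun x => f x ^ a * g x ^ b * h x ^ c) s m
      ≤ eLpNorm f p m ^ a * eLpNorm g q m ^ b * eLpNorm h r m ^ c := by
  have key : ∀ {a : ℝ}, 0 < a → ∀ p : ℝ≥0∞, (p / ENNReal.ofReal a)⁻¹ = ENNReal.ofReal a * p⁻¹ := by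
    intro a ha p
    rw [ENNReal.inv_div (by simp) (by simp [ha]), ENNReal.div_eq_inv_mul, mul_comm]
  rw [← eLpNorm_rpow_ennreal f ha, ← eLpNorm_rpow_ennreal g hb, ← eLpNorm_rpow_ennreal h hc]
  refine (eLpNorm_mul_le_ennreal (p := (ENNReal.ofReal a * p⁻¹ + ENNReal.ofReal b * q⁻¹)⁻¹)
    (q := r / ENNReal.ofReal c) ((hf.pow_const a).mul (hg.pow_const b)) (hh.pow_const c) ?_).trans ?_
  · rw [inv_inv, key hc, H]
  · gcongr
    refine eLpNorm_mul_le_ennreal (hf.pow_const a) (hg.pow_const b) ?_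
    rw [inv_inv, key ha, key hb]

lemma timeNorm_eq_eLpNorm (T : ℝ) {a : ℝ≥0∞} (ha : a ≠ 0) (G : ℝ → ℝ≥0∞) :
    timeNorm T a G = eLpNorm G a (volume.restrict (Set.Ioo 0 T)) := by
  unfold timeNorm
  split_ifs with h
  · subst h
    simp [eLpNormEssSup_eq_essSup_enorm]
  · simp [eLpNorm_eq_lintegral_rpow_enorm_toReal ha h]

lemma measurable_eLpNorm_slice (m : Measure (ℝ × ℝ)) [SFinite m] {F : ℝ × ℝ → ℝ → ℝ}
    (hF : Measurable (Function.uncurry F)) (b : ℝ≥0∞) :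
    Measurable fun t => eLpNorm (fun x => F x t) b m := by
  by_cases h0 : b = 0
  · simp [h0]
  by_cases ht : b = ⊤
  · subst ht
    refine measurable_of_Iic fun c => ?_
    -- `essSup ≤ c` says exactly that the slice of `{c < |F|}` at time `t` is null.
    have hS : MeasurableSet {q : (ℝ × ℝ) × ℝ | c < ‖Function.uncurry F q‖ₑ} :=
      measurableSet_lt measurable_const hF.enorm
    have hM := measurable_measure_prodMk_right (μ := m) hS
    convert! hM (measurableSet_singleton 0) using 1
    ext t
    simp only [Set.mem_preimage, Set.mem_Iic, eLpNorm_exponent_top, Set.mem_singleton_iff,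
      eLpNormEssSup_eq_essSup_enorm]
    have : essSup (fun x => ‖F x t‖ₑ) m ≤ c ↔ ∀ᵐ x ∂m, ‖F x t‖ₑ ≤ c :=
      ⟨fun h => (ENNReal.ae_le_essSup _).mono fun x hx => hx.trans h,
        fun h => essSup_le_of_ae_le c h⟩
    rw [this, ae_iff]
    simp [Set.preimage, Function.uncurry]
  · simp only [eLpNorm_eq_lintegral_rpow_enorm_toReal h0 ht]
    refine Measurable.pow_const ?_ _
    exact Measurable.lintegral_prod_left' (f := fun q => ‖Function.uncurry F q‖ₑ ^ b.toReal)
      (hF.enorm.pow_const _)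

/-- The factorization `ρ|u| = ρ^μ (ρu²)^β |u|^ν`, in terms of extended norms. -/
lemma enorm_factor {μ β ν : ℝ} (hμ : 0 < μ) (hβ0 : 0 < β) (hν0 : 0 < ν)
    (h1 : μ + β = 1) (h2 : 2 * β + ν = 1) (a b : ℝ) :
    ‖a * b‖ₑ = ‖a‖ₑ ^ μ * ‖a * b ^ 2‖ₑ ^ β * ‖b‖ₑ ^ ν := by
  have ea : ‖a‖ₑ = ‖a‖ₑ ^ μ * ‖a‖ₑ ^ β := by
    rw [← ENNReal.rpow_add_of_nonneg _ _ hμ.le hβ0.le, h1, ENNReal.rpow_one]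
  have eb : ‖b‖ₑ = (‖b‖ₑ ^ 2) ^ β * ‖b‖ₑ ^ ν := by
    rw [← ENNReal.rpow_natCast, ← ENNReal.rpow_mul,
      ← ENNReal.rpow_add_of_nonneg _ _ (by positivity) hν0.le]
    push_cast
    rw [h2, ENNReal.rpow_one]
  rw [enorm_mul, enorm_mul, enorm_pow, ENNReal.mul_rpow_of_nonneg _ _ hβ0.le]
  conv_lhs => rw [ea, eb]
  ring

/-- Three-factor mixed-norm estimate: for `μ ∈ (1/2,1)`, `β = 1-μ`, `ν = 2μ-1`,
and exponents `r, s, σ, p, z ∈ [1,∞]` with `μ/r + ν/2 = 1/p` and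
`μ/s + β + ν/σ = 1/z`, for every nonnegative measurable `ρ` and measurable `u`
on `Ω × (0,T)`,
`‖ρu‖_{L^p(0,T;L^z(Ω))} ≤ ‖ρ‖_{L^r(0,T;L^s(Ω))}^μ ‖ρu²‖_{L^∞(0,T;L¹(Ω))}^β ‖u‖_{L²(0,T;L^σ(Ω))}^ν`. -/
theorem three_factor_mixed_norm (Ω : Set (ℝ × ℝ)) (hΩ : MeasurableSet Ω)
    (T : ℝ) (hT : 0 < T)
    (μ β ν : ℝ) (hμ0 : 1 / 2 < μ) (hμ1 : μ < 1)
    (hβ : β = 1 - μ) (hν : ν = 2 * μ - 1)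
    (r s σ p z : ℝ≥0∞)
    (hr : 1 ≤ r) (hs : 1 ≤ s) (hσ : 1 ≤ σ) (hp : 1 ≤ p) (hz : 1 ≤ z)
    (hpeq : ENNReal.ofReal μ * r⁻¹ + ENNReal.ofReal ν * (2 : ℝ≥0∞)⁻¹ = p⁻¹)
    (hzeq : ENNReal.ofReal μ * s⁻¹ + ENNReal.ofReal β
        + ENNReal.ofReal ν * σ⁻¹ = z⁻¹)
    (ρ u : ℝ × ℝ → ℝ → ℝ)
    (hρ : Measurable (Function.uncurry ρ)) (hρ0 : ∀ x t, 0 ≤ ρ x t)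
    (hu : Measurable (Function.uncurry u)) :
    mixedNorm Ω T p z (fun x t => ρ x t * u x t)
      ≤ (mixedNorm Ω T r s ρ) ^ μ
        * (mixedNorm Ω T ⊤ 1 (fun x t => ρ x t * u x t ^ 2)) ^ β
        * (mixedNorm Ω T 2 σ u) ^ ν := by
  have hμ : 0 < μ := by linarith
  have hβ0 : 0 < β := by linarith
  have hν0 : 0 < ν := by linarith
  have ne0 : ∀ {a : ℝ≥0∞}, 1 ≤ a → a ≠ 0 := fun h => (zero_lt_one.trans_le h).ne'
  have hw : Measurable (Function.uncurry fun x t => ρ x t * u x t ^ 2) :=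
    hρ.mul (hu.pow_const 2)
  unfold mixedNorm
  rw [timeNorm_eq_eLpNorm T (ne0 hp), timeNorm_eq_eLpNorm T (ne0 hr),
    timeNorm_eq_eLpNorm T top_ne_zero, timeNorm_eq_eLpNorm T two_ne_zero]
  refine le_trans (eLpNorm_mono_enorm fun t => ?_) (eLpNorm_three_le
    (measurable_eLpNorm_slice _ hρ s).aemeasurable (measurable_eLpNorm_slice _ hw 1).aemeasurable
    (measurable_eLpNorm_slice _ hu σ).aemeasurable hμ hβ0 hν0 (by simpa using hpeq))
  have sl : ∀ {F : ℝ × ℝ → ℝ → ℝ}, Measurable (Function.uncurry F) →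
      AEMeasurable (fun x => ‖F x t‖ₑ) (volume.restrict Ω) := fun hF =>
    (hF.comp (measurable_id.prodMk measurable_const)).enorm.aemeasurable
  have := eLpNorm_three_le (sl hρ) (sl hw) (sl hu) hμ hβ0 hν0 (p := s) (q := 1) (r := σ) (s := z)
    (by simpa using hzeq)
  simp only [← enorm_factor hμ hβ0 hν0 (by linarith) (by linarith), eLpNorm_enorm] at this
  simpa only [enorm_eq_self] using this
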